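/- (Renormalization group equation for the toy model.) Let A be a Banach algebra with unit, H : ℝ → A continuous, and t ≥ 0. For λ ∈ ℝ, the series A^λ(t) := Σ_{n≥0} λ^n H_n(t) and β^λ(t) := Σ_{n≥1} λ^n H_{𝒟_n}(t) converge absolutely in A, the map λ ↦ A^λ(t) is differentiable, and λ · (∂/∂λ) A^λ(t) = A^λ(t) · β^λ(t). -/

import Mathlib

open MeasureTheory

open Classical in
/-- The descent set of a permutation `σ ∈ S_n` (1-based convention):
`Desc(σ) = {i ∈ {1,…,n−1} : σ(i) > σ(i+1)}`. -/
noncomputable def descSet {n : ℕ} (σ : Equiv.Perm (Fin n)) : Finset ℕ :=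
  (Finset.Ioo 0 n).filter
    (fun i => ∃ h : i < n, σ ⟨i, h⟩ < σ ⟨i - 1, lt_of_le_of_lt (Nat.sub_le i 1) h⟩)

/-- The simplex `Δ_t^n = {0 ≤ t₁ ≤ ⋯ ≤ tₙ ≤ t}` inside `Fin n → ℝ`. -/
def simplex (n : ℕ) (t : ℝ) : Set (Fin n → ℝ) :=
  {u | (∀ i, 0 ≤ u i ∧ u i ≤ t) ∧ ∀ i j, i ≤ j → u i ≤ u j}

variable {A : Type*} [NormedRing A] [NormedAlgebra ℝ A] [CompleteSpace A]

/-- The iterated integral `H_σ(t) = ∫_{Δ_t^n} H(t_{σ(1)})⋯H(t_{σ(n)}) dt₁⋯dtₙ`. -/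
noncomputable def Hperm (H : ℝ → A) {n : ℕ} (σ : Equiv.Perm (Fin n)) (t : ℝ) : A :=
  ∫ u in simplex n t, (List.ofFn (fun j => H (u (σ j)))).prod

/-- `H_n(t) = ∫_{Δ_t^n} H(t₁)⋯H(tₙ) dt₁⋯dtₙ`, with `H_0(t) = 1`. -/
noncomputable def Hn (H : ℝ → A) : ℕ → ℝ → A
  | 0, _ => 1
  | (n + 1), t => Hperm H (1 : Equiv.Perm (Fin (n + 1))) t

/-- The iterated integral evaluated on the Dynkin element:
`H_{𝒟_m}(t) = Σ_{j=0}^{m-1} (-1)^j H_{D_{={1,…,j}}^{(m)}}(t)`. -/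
noncomputable def HDyn (H : ℝ → A) (m : ℕ) (t : ℝ) : A :=
  ∑ j ∈ Finset.range m, (-1 : ℝ) ^ j •
    ∑ σ ∈ Finset.univ.filter
        (fun σ : Equiv.Perm (Fin m) => descSet σ = Finset.Icc 1 j),
      Hperm H σ t

/-!
Almost every point `v` of the cube `[0,t]^n` has distinct coordinates and hence lies in exactly one
of the chambers indexed by `S_n`, on which the descents of `v` are those of the permutation.
Therefore `H_{D_{=T}}(t)` is the integral of `H(v₁)⋯H(vₙ)` over the points with descent set `T`.
Cutting tuples at position `m` shows that these integrals multiply like ribbon Schur functions: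
`R_S R_T = R_{S ∪ (m + T)} + R_{S ∪ {m} ∪ (m + T)}`. Applied to `H_a H_{𝒟_b}`, this rule makes the
alternating sums telescope to Dynkin's identity `∑_{a+b=n} H_a H_{𝒟_b} = n H_n`, which is the
equation to be proved, coefficient by coefficient. The same rule for volumes gives
`‖H_{𝒟_n}(t)‖ ≤ ‖1‖ (2Ct)^n / n!`.
-/

section Descents

variable {α : Type*} [LT α]

open Classical in
/-- The descents of a tuple with entries in any ordered type. Positions are numbered as in
`descSet`, which is the special case of permutations. -/
noncomputable def descents {n : ℕ} (v : Fin n → α) : Finset ℕ :=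
  (Finset.Ioo 0 n).filter
    (fun i => ∃ h : i < n, v ⟨i, h⟩ < v ⟨i - 1, lt_of_le_of_lt (Nat.sub_le i 1) h⟩)

lemma descSet_eq_descents {n : ℕ} (σ : Equiv.Perm (Fin n)) : descSet σ = descents σ := by
  simp only [descSet, descents]
  congr

lemma mem_descents {n : ℕ} {v : Fin n → α} {i : ℕ} :
    i ∈ descents v ↔ 0 < i ∧ ∃ h : i < n, v ⟨i, h⟩ < v ⟨i - 1, by lia⟩ := by
  simp only [descents, Finset.mem_filter, Finset.mem_Ioo, and_assoc]
  exact and_congr_right fun _ => ⟨And.right, fun h => ⟨h.1, h⟩⟩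

lemma descents_subset_Ico {n : ℕ} (v : Fin n → α) : descents v ⊆ Finset.Ico 1 n := fun i hi => by
  obtain ⟨hpos, hlt, -⟩ := mem_descents.1 hi
  exact Finset.mem_Ico.2 ⟨hpos, hlt⟩

lemma zero_notMem_descents {n : ℕ} (v : Fin n → α) : 0 ∉ descents v := by
  simp [mem_descents]

lemma descents_subset_range {n : ℕ} (v : Fin n → α) : descents v ⊆ Finset.range n := fun i hi => by
  simpa using (mem_descents.1 hi).2.1

lemma succ_mem_descents {n : ℕ} {v : Fin (n + 1) → α} (i : Fin n) :
    (i : ℕ) + 1 ∈ descents v ↔ v i.succ < v i.castSucc := by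
  simp [mem_descents, Fin.succ, Fin.castSucc, Fin.castAdd, Fin.castLE]

lemma descents_eq_iff {n : ℕ} {v : Fin (n + 1) → α} {T : Finset ℕ}
    (hT : T ⊆ Finset.Ico 1 (n + 1)) :
    descents v = T ↔ ∀ i : Fin n, v i.succ < v i.castSucc ↔ (i : ℕ) + 1 ∈ T := by
  refine ⟨fun h i => by rw [← h, succ_mem_descents], fun h => Finset.ext fun k => ?_⟩
  by_cases hk : k ∈ Finset.Ico 1 (n + 1)
  · obtain ⟨hpos, hlt⟩ := Finset.mem_Ico.1 hk
    obtain ⟨i, rfl⟩ : ∃ i : Fin n, (i : ℕ) + 1 = k := ⟨⟨k - 1, by lia⟩, Nat.sub_add_cancel hpos⟩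
    rw [succ_mem_descents, h]
  · exact iff_of_false (fun h => hk (descents_subset_Ico v h)) fun h => hk (hT h)

lemma descents_congr {β : Type*} [LT β] {n : ℕ} {v : Fin n → α} {w : Fin n → β}
    (h : ∀ i j, v i < v j ↔ w i < w j) : descents v = descents w := by
  ext i
  simp only [mem_descents, h]

lemma mem_descents_append_of_lt {m n : ℕ} (x : Fin m → α) (y : Fin n → α) {i : ℕ} (hi : i < m) :
    i ∈ descents (Fin.append x y) ↔ i ∈ descents x := by
  have happ (k : ℕ) (hk : k < m) : Fin.append x y ⟨k, by lia⟩ = x ⟨k, hk⟩ :=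
    Fin.append_left x y ⟨k, hk⟩
  simp only [mem_descents, happ i hi, happ (i - 1) (by lia), hi, Nat.lt_add_right n hi]

lemma add_mem_descents_append {m n : ℕ} (x : Fin m → α) (y : Fin n → α) {i : ℕ} (hi : 0 < i) :
    m + i ∈ descents (Fin.append x y) ↔ i ∈ descents y := by
  have happ (k : ℕ) (hk : k < n) : Fin.append x y ⟨m + k, by lia⟩ = y ⟨k, hk⟩ :=
    Fin.append_right x y ⟨k, hk⟩
  have hpos : 0 < m + i := by lia
  simp only [mem_descents, hpos, hi, Nat.add_lt_add_iff_left, Nat.add_sub_assoc hi, true_and]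
  exact exists_congr fun h => by rw [happ i h, happ (i - 1) (by lia)]

/-- The descent set of a concatenation of tuples whose descent sets are `S` and `T`, up to the
possible descent `m` at the junction, where `m` is the length of the first tuple. -/
def joinDescents (m : ℕ) (S T : Finset ℕ) : Finset ℕ :=
  S ∪ T.map (addLeftEmbedding m)

lemma mem_joinDescents_of_lt {m i : ℕ} {S T : Finset ℕ} (hi : i < m) :
    i ∈ joinDescents m S T ↔ i ∈ S := by
  simp only [joinDescents, Finset.mem_union, Finset.mem_map, addLeftEmbedding_apply]
  grind

lemma add_mem_joinDescents {m i : ℕ} {S T : Finset ℕ} (hS : S ⊆ Finset.range m) :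
    m + i ∈ joinDescents m S T ↔ i ∈ T := by
  have hmiS : m + i ∉ S := fun h => by simpa using hS h
  simp [joinDescents, hmiS]

lemma joinDescents_inj {m : ℕ} {S S' T T' : Finset ℕ} (hS : S ⊆ Finset.range m)
    (hS' : S' ⊆ Finset.range m) :
    joinDescents m S T = joinDescents m S' T' ↔ S = S' ∧ T = T' := by
  refine ⟨fun h => ⟨?_, ?_⟩, fun ⟨hS, hT⟩ => hS ▸ hT ▸ rfl⟩
  · ext i
    by_cases hi : i < m
    · rw [← mem_joinDescents_of_lt hi, h, mem_joinDescents_of_lt hi]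
    · exact iff_of_false (fun h => hi (Finset.mem_range.1 (hS h)))
        fun h => hi (Finset.mem_range.1 (hS' h))
  · ext i
    rw [← add_mem_joinDescents hS, h, add_mem_joinDescents hS']

lemma erase_descents_append {m n : ℕ} (x : Fin m → α) (y : Fin n → α) :
    (descents (Fin.append x y)).erase m = joinDescents m (descents x) (descents y) := by
  ext k
  rw [Finset.mem_erase]
  rcases lt_or_ge k m with hk | hk
  · rw [mem_descents_append_of_lt x y hk, mem_joinDescents_of_lt hk, and_iff_right hk.ne]
  · obtain ⟨i, rfl⟩ := Nat.exists_eq_add_of_le hk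
    rw [add_mem_joinDescents (descents_subset_range x)]
    rcases i.eq_zero_or_pos with rfl | hi
    · simp [zero_notMem_descents]
    · rw [add_mem_descents_append x y hi, and_iff_right (by lia)]

lemma descents_append_eq_iff {m n : ℕ} (x : Fin m → α) (y : Fin n → α) {S T : Finset ℕ}
    (hS : S ⊆ Finset.range m) (hT : 0 ∉ T) :
    descents (Fin.append x y) = joinDescents m S T ∨
        descents (Fin.append x y) = insert m (joinDescents m S T) ↔
      descents x = S ∧ descents y = T := by
  have hm : m ∉ joinDescents m S T := by simpa using (add_mem_joinDescents (i := 0) hS).not.2 hT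
  rw [← joinDescents_inj (descents_subset_range x) hS, ← erase_descents_append]
  by_cases hmD : m ∈ descents (Fin.append x y)
  · rw [Finset.erase_eq_iff_eq_insert hmD hm]
    exact or_iff_right fun h => hm (h ▸ hmD)
  · rw [Finset.erase_eq_of_notMem hmD]
    exact or_iff_left fun h => hmD (h ▸ Finset.mem_insert_self _ _)

end Descents

lemma descents_eq_empty_iff {α : Type*} [LinearOrder α] {n : ℕ} {v : Fin n → α} :
    descents v = ∅ ↔ Monotone v := by
  rcases n with _ | n
  · simp [descents, Subsingleton.monotone]
  · simp [descents_eq_iff (Finset.empty_subset _), Fin.monotone_iff_le_succ]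

lemma descents_eq_Ico_iff {α : Type*} [Preorder α] {n : ℕ} {v : Fin n → α} :
    descents v = Finset.Ico 1 n ↔ StrictAnti v := by
  rcases n with _ | n
  · simp [descents, Subsingleton.strictAnti]
  · simp [descents_eq_iff subset_rfl, Fin.strictAnti_iff_succ_lt]

section Chambers

/-- The cube `[0,t]^n`. -/
def cube (n : ℕ) (t : ℝ) : Set (Fin n → ℝ) :=
  Set.univ.pi fun _ => Set.Icc 0 t

/-- The points of the cube `[0,t]^n` with descent set `T`: the domain of the iterated integral
`H_{D_{=T}}(t)` after substituting the permuted variables. -/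
def descentRegion (n : ℕ) (t : ℝ) (T : Finset ℕ) : Set (Fin n → ℝ) :=
  {v ∈ cube n t | descents v = T}

/-- The points of the cube `[0,t]^n` whose coordinates are pairwise distinct and in the same
relative order as the values of `σ`. -/
def chamber {n : ℕ} (t : ℝ) (σ : Equiv.Perm (Fin n)) : Set (Fin n → ℝ) :=
  {v ∈ cube n t | StrictMono (v ∘ σ.symm)}

lemma measurableSet_cube (n : ℕ) (t : ℝ) : MeasurableSet (cube n t) :=
  .univ_pi fun _ => measurableSet_Icc

lemma isCompact_cube (n : ℕ) (t : ℝ) : IsCompact (cube n t) :=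
  isCompact_univ_pi fun _ => isCompact_Icc

lemma volume_ne_top_of_subset_cube {n : ℕ} {t : ℝ} {s : Set (Fin n → ℝ)} (hs : s ⊆ cube n t) :
    volume s ≠ ⊤ :=
  measure_ne_top_of_subset hs (isCompact_cube n t).measure_ne_top

lemma descentRegion_subset_cube (n : ℕ) (t : ℝ) (T : Finset ℕ) :
    descentRegion n t T ⊆ cube n t :=
  Set.sep_subset _ _

lemma chamber_subset_cube {n : ℕ} (t : ℝ) (σ : Equiv.Perm (Fin n)) : chamber t σ ⊆ cube n t :=
  Set.sep_subset _ _

lemma comp_perm_mem_cube_iff {n : ℕ} {t : ℝ} {v : Fin n → ℝ} (σ : Equiv.Perm (Fin n)) :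
    v ∘ σ ∈ cube n t ↔ v ∈ cube n t := by
  simp only [cube, Set.mem_univ_pi, Function.comp_apply]
  exact σ.forall_congr_left.trans (by simp)

lemma append_mem_cube_iff {m n : ℕ} {t : ℝ} {x : Fin m → ℝ} {y : Fin n → ℝ} :
    Fin.append x y ∈ cube (m + n) t ↔ x ∈ cube m t ∧ y ∈ cube n t := by
  simp only [cube, Set.mem_univ_pi, Fin.forall_fin_add, Fin.append_left, Fin.append_right]

lemma simplex_eq (n : ℕ) (t : ℝ) : simplex n t = {v ∈ cube n t | Monotone v} := by
  simp only [simplex, cube, Set.mem_univ_pi, Set.mem_Icc, Monotone]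

lemma descentRegion_empty (n : ℕ) (t : ℝ) : descentRegion n t ∅ = simplex n t := by
  simp only [descentRegion, descents_eq_empty_iff, simplex_eq]

lemma descentRegion_eq_empty {n : ℕ} {T : Finset ℕ} (t : ℝ) (hT : 0 ∈ T) :
    descentRegion n t T = ∅ :=
  Set.eq_empty_of_forall_notMem fun v hv => zero_notMem_descents v (hv.2 ▸ hT)

lemma measurableSet_descentRegion (n : ℕ) (t : ℝ) (T : Finset ℕ) :
    MeasurableSet (descentRegion n t T) := by
  suffices h : MeasurableSet {v : Fin n → ℝ | descents v = T} from (measurableSet_cube n t).inter h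
  simp only [Finset.ext_iff, mem_descents, Set.ofPred_forall]
  refine .iInter fun i => .iff (.inter (.const _) ?_) (.const _)
  by_cases hi : i < n
  · simp only [hi, exists_true_left]
    exact measurableSet_lt (measurable_pi_apply _) (measurable_pi_apply _)
  · simp only [hi, IsEmpty.exists_iff]
    exact .const _

lemma measurableSet_chamber {n : ℕ} (t : ℝ) (σ : Equiv.Perm (Fin n)) :
    MeasurableSet (chamber t σ) := by
  suffices h : MeasurableSet {v : Fin n → ℝ | StrictMono (v ∘ σ.symm)} from
    (measurableSet_cube n t).inter h
  simp only [StrictMono, Set.ofPred_forall]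
  exact .iInter fun i => .iInter fun j => .iInter fun _ =>
    measurableSet_lt (measurable_pi_apply _) (measurable_pi_apply _)

lemma injective_of_mem_chamber {n : ℕ} {t : ℝ} {σ : Equiv.Perm (Fin n)} {v : Fin n → ℝ}
    (hv : v ∈ chamber t σ) : Function.Injective v :=
  hv.2.injective.of_comp_right σ.symm.surjective

lemma descents_of_mem_chamber {n : ℕ} {t : ℝ} {σ : Equiv.Perm (Fin n)} {v : Fin n → ℝ}
    (hv : v ∈ chamber t σ) : descents v = descSet σ := by
  rw [descSet_eq_descents]
  exact descents_congr fun i j => by simpa using hv.2.lt_iff_lt (a := σ i) (b := σ j)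

lemma pairwise_disjoint_chamber (n : ℕ) (t : ℝ) :
    Pairwise (Function.onFun Disjoint (chamber (n := n) t)) := fun σ τ hne =>
  Set.disjoint_left.2 fun v hσ hτ => hne <| by
    have hcomp : v ∘ σ.symm = v ∘ τ.symm := Tuple.unique_monotone hσ.2.monotone hτ.2.monotone
    have hsymm := (injective_of_mem_chamber hσ).comp_left hcomp
    exact Equiv.symm_bijective.injective (Equiv.coe_fn_injective hsymm)

lemma exists_mem_chamber {n : ℕ} {t : ℝ} {v : Fin n → ℝ} (hv : Function.Injective v)
    (hcube : v ∈ cube n t) : ∃ σ : Equiv.Perm (Fin n), v ∈ chamber t σ :=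
  ⟨(Tuple.sort v).symm, hcube,
    (Tuple.monotone_sort v).strictMono_of_injective (hv.comp (Tuple.sort v).injective)⟩

lemma ae_injective {ι : Type*} [Fintype ι] : ∀ᵐ v : ι → ℝ, Function.Injective v := by
  classical
  have hne (i j : ι) (hij : i ≠ j) : ∀ᵐ v : ι → ℝ, v i ≠ v j := by
    let diagonal : Submodule ℝ (ι → ℝ) :=
      LinearMap.eqLocus (LinearMap.proj i) (LinearMap.proj (φ := fun _ => ℝ) j)
    have hproper : diagonal ≠ ⊤ := fun h => by
      have hsingle : (Pi.single i 1 : ι → ℝ) ∈ diagonal := h ▸ Submodule.mem_top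
      simp [diagonal, hij.symm] at hsingle
    simpa [ae_iff, diagonal] using! Measure.addHaar_submodule volume diagonal hproper
  have hall : ∀ᵐ v : ι → ℝ, ∀ i j, i ≠ j → v i ≠ v j := by
    simpa only [ae_all_iff] using hne
  filter_upwards [hall] with v hv i j h
  exact not_imp_not.1 (hv i j) h

lemma descentRegion_ae_eq_biUnion_chamber (n : ℕ) (t : ℝ) (T : Finset ℕ) :
    descentRegion n t T =ᵐ[volume]
      ⋃ σ ∈ Finset.univ.filter (fun σ : Equiv.Perm (Fin n) => descSet σ = T), chamber t σ := by
  refine Filter.eventuallyEq_set.2 ?_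
  filter_upwards [ae_injective] with v hv
  simp only [Set.mem_iUnion, Finset.mem_filter, Finset.mem_univ, true_and, exists_prop]
  constructor
  · rintro ⟨hcube, rfl⟩
    obtain ⟨σ, hσ⟩ := exists_mem_chamber hv hcube
    exact ⟨σ, (descents_of_mem_chamber hσ).symm, hσ⟩
  · rintro ⟨σ, rfl, hσ⟩
    exact ⟨hσ.1, descents_of_mem_chamber hσ⟩

lemma measurePreserving_comp_perm {ι : Type*} [Fintype ι] (σ : Equiv.Perm ι) :
    MeasurePreserving (fun v : ι → ℝ => v ∘ σ) :=
  volume_preserving_arrowCongr' σ.symm (.refl ℝ) (.id _)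

lemma measurableEmbedding_comp_perm {ι : Type*} (σ : Equiv.Perm ι) :
    MeasurableEmbedding (fun v : ι → ℝ => v ∘ σ) :=
  (MeasurableEquiv.arrowCongr' σ.symm (.refl ℝ)).measurableEmbedding

lemma preimage_simplex_ae_eq_chamber {n : ℕ} (t : ℝ) (σ : Equiv.Perm (Fin n)) :
    (fun v : Fin n → ℝ => v ∘ σ.symm) ⁻¹' simplex n t =ᵐ[volume] chamber t σ := by
  refine Filter.eventuallyEq_set.2 ?_
  filter_upwards [ae_injective] with v hv
  rw [simplex_eq]
  refine and_congr (comp_perm_mem_cube_iff σ.symm) ⟨fun h => ?_, StrictMono.monotone⟩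
  exact h.strictMono_of_injective (hv.comp σ.symm.injective)

lemma volume_chamber {n : ℕ} (t : ℝ) (σ : Equiv.Perm (Fin n)) :
    volume (chamber t σ) = volume (simplex n t) := by
  rw [← measure_congr (preimage_simplex_ae_eq_chamber t σ),
    (measurePreserving_comp_perm σ.symm).measure_preimage_emb
      (measurableEmbedding_comp_perm σ.symm)]

lemma volume_real_simplex_le (n : ℕ) {t : ℝ} (ht : 0 ≤ t) :
    volume.real (simplex n t) ≤ t ^ n / n.factorial := by
  have hcube : volume.real (cube n t) = t ^ n := by
    rw [measureReal_def, cube, volume_pi_pi]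
    simp [ht]
  have hchambers : n.factorial * volume.real (simplex n t) ≤ volume.real (cube n t) := by
    calc n.factorial * volume.real (simplex n t)
        = ∑ σ : Equiv.Perm (Fin n), volume.real (chamber t σ) := by
          simp [measureReal_def, volume_chamber, Fintype.card_perm]
      _ = volume.real (⋃ σ : Equiv.Perm (Fin n), chamber t σ) :=
          (measureReal_iUnion_fintype (pairwise_disjoint_chamber n t) (measurableSet_chamber t)
            fun σ => volume_ne_top_of_subset_cube (chamber_subset_cube t σ)).symm
      _ ≤ volume.real (cube n t) :=
          measureReal_mono (Set.iUnion_subset (chamber_subset_cube t))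
            (volume_ne_top_of_subset_cube subset_rfl)
  rw [le_div_iff₀' (by positivity)]
  exact hchambers.trans_eq hcube

end Chambers

section RibbonProduct

lemma measurePreserving_append {X : Type*} [MeasureSpace X] [SigmaFinite (volume : Measure X)]
    (m n : ℕ) :
    MeasurePreserving fun z : (Fin m → X) × (Fin n → X) => Fin.append z.1 z.2 := by
  have hmeas : Measurable fun z : (Fin m → X) × (Fin n → X) => Fin.append z.1 z.2 := by
    simp only [measurable_pi_iff, Fin.forall_fin_add, Fin.append_left, Fin.append_right]
    exact ⟨fun i => by fun_prop, fun i => by fun_prop⟩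
  refine ⟨hmeas, (Measure.pi_eq fun s hs => ?_).symm⟩
  have hbox : (fun z : (Fin m → X) × (Fin n → X) => Fin.append z.1 z.2) ⁻¹' Set.univ.pi s =
      (Set.univ.pi fun i => s (Fin.castAdd n i)) ×ˢ (Set.univ.pi fun i => s (Fin.natAdd m i)) := by
    ext z
    simp only [Set.mem_preimage, Set.mem_prod, Set.mem_univ_pi, Fin.forall_fin_add,
      Fin.append_left, Fin.append_right]
  rw [Measure.map_apply hmeas (.univ_pi hs), hbox, Measure.volume_eq_prod, Measure.prod_prod,
    volume_pi_pi, volume_pi_pi, Fin.prod_univ_add]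

lemma measurableEmbedding_append (m n : ℕ) :
    MeasurableEmbedding fun z : (Fin m → ℝ) × (Fin n → ℝ) => Fin.append z.1 z.2 :=
  (Fin.appendHomeomorph m n).measurableEmbedding

variable {m n : ℕ} {S T : Finset ℕ}

lemma preimage_append_descentRegion (t : ℝ) (hS : S ⊆ Finset.range m) (hT : 0 ∉ T) :
    (fun z : (Fin m → ℝ) × (Fin n → ℝ) => Fin.append z.1 z.2) ⁻¹'
        (descentRegion (m + n) t (joinDescents m S T) ∪
          descentRegion (m + n) t (insert m (joinDescents m S T))) =
      descentRegion m t S ×ˢ descentRegion n t T := by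
  ext ⟨x, y⟩
  simp only [descentRegion, Set.mem_preimage, Set.mem_union, Set.mem_prod, Set.mem_sep_iff,
    ← and_or_left, append_mem_cube_iff, descents_append_eq_iff x y hS hT]
  exact and_and_and_comm

lemma disjoint_descentRegion {T' : Finset ℕ} (t : ℝ) (h : T ≠ T') :
    Disjoint (descentRegion n t T) (descentRegion n t T') :=
  Set.disjoint_left.2 fun _ hT hT' => h (hT.2.symm.trans hT'.2)

lemma volume_real_descentRegion_joinDescents_le (t : ℝ) (hS : S ⊆ Finset.range m) (hT : 0 ∉ T) :
    volume.real (descentRegion (m + n) t (joinDescents m S T)) ≤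
      volume.real (descentRegion m t S) * volume.real (descentRegion n t T) := by
  rw [← measureReal_prod_prod, ← preimage_append_descentRegion t hS hT, ← Measure.volume_eq_prod,
    measureReal_def (s := _ ⁻¹' _),
    (measurePreserving_append m n).measure_preimage_emb (measurableEmbedding_append m n)]
  exact measureReal_mono Set.subset_union_left
    (volume_ne_top_of_subset_cube
      (Set.union_subset (descentRegion_subset_cube _ t _) (descentRegion_subset_cube _ t _)))

lemma descentRegion_Ico (n : ℕ) (t : ℝ) :
    descentRegion n t (Finset.Ico 1 n) = chamber t Fin.revPerm := by
  ext v
  refine and_congr_right fun _ => descents_eq_Ico_iff.trans ?_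
  refine ⟨fun h => h.comp Fin.rev_strictAnti, fun h i j hij => ?_⟩
  simpa using h (Fin.rev_lt_rev.2 hij)

lemma volume_real_descentRegion_Ico_le {t : ℝ} (ht : 0 ≤ t) (hmn : m ≤ n) :
    volume.real (descentRegion n t (Finset.Ico 1 m)) ≤ n.choose m * (t ^ n / n.factorial) := by
  obtain ⟨k, rfl⟩ := Nat.exists_eq_add_of_le hmn
  have hjoin : joinDescents m (Finset.Ico 1 m) ∅ = Finset.Ico 1 m := by simp [joinDescents]
  calc volume.real (descentRegion (m + k) t (Finset.Ico 1 m))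
      ≤ volume.real (descentRegion m t (Finset.Ico 1 m)) * volume.real (descentRegion k t ∅) := by
        have hsub : Finset.Ico 1 m ⊆ Finset.range m := fun i hi => by simp_all
        simpa only [hjoin] using
          volume_real_descentRegion_joinDescents_le t hsub (Finset.notMem_empty 0)
    _ = volume.real (simplex m t) * volume.real (simplex k t) := by
        rw [descentRegion_empty, descentRegion_Ico, measureReal_def, volume_chamber,
          ← measureReal_def]
    _ ≤ t ^ m / m.factorial * (t ^ k / k.factorial) := by
        gcongr <;> exact volume_real_simplex_le _ ht
    _ = (m + k).choose m * (t ^ (m + k) / (m + k).factorial) := by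
        rw [Nat.cast_add_choose ℝ, pow_add]
        field_simp

end RibbonProduct

section IteratedIntegrals

variable {B : Type*} [NormedRing B]

/-- The ordered product `H(v₁)⋯H(vₙ)`. -/
def orderedProd (H : ℝ → B) {n : ℕ} (v : Fin n → ℝ) : B :=
  (List.ofFn fun j => H (v j)).prod

lemma continuous_orderedProd {H : ℝ → B} (hH : Continuous H) (n : ℕ) :
    Continuous (orderedProd H : (Fin n → ℝ) → B) := by
  unfold orderedProd
  simp only [List.ofFn_eq_map]
  exact continuous_list_prod _ fun i _ => hH.comp (continuous_apply i)

lemma orderedProd_append (H : ℝ → B) {m n : ℕ} (x : Fin m → ℝ) (y : Fin n → ℝ) :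
    orderedProd H (Fin.append x y) = orderedProd H x * orderedProd H y := by
  simp [orderedProd, List.ofFn_add]

lemma norm_orderedProd_le {H : ℝ → B} {n : ℕ} {v : Fin n → ℝ} {C : ℝ} (hC : ∀ i, ‖H (v i)‖ ≤ C) :
    ‖orderedProd H v‖ ≤ ‖(1 : B)‖ * C ^ n := by
  induction n with
  | zero => simp [orderedProd]
  | succ n ih =>
    calc ‖orderedProd H v‖ = ‖H (v 0) * orderedProd H fun i => v i.succ‖ := by
          simp [orderedProd, List.ofFn_succ]
      _ ≤ ‖H (v 0)‖ * ‖orderedProd H fun i => v i.succ‖ := norm_mul_le _ _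
      _ ≤ C * (‖(1 : B)‖ * C ^ n) :=
          mul_le_mul (hC 0) (ih fun i => hC i.succ) (norm_nonneg _) ((norm_nonneg _).trans (hC 0))
      _ = ‖(1 : B)‖ * C ^ (n + 1) := by ring

lemma integrableOn_orderedProd {H : ℝ → B} (hH : Continuous H) {n : ℕ} {t : ℝ}
    {s : Set (Fin n → ℝ)} (hs : s ⊆ cube n t) : IntegrableOn (orderedProd H) s :=
  ((continuous_orderedProd hH n).continuousOn.integrableOn_compact (isCompact_cube n t)).mono_set hs

variable [NormedAlgebra ℝ B]

/-- The iterated integral `H_{D_{=T}}(t)` over the permutations in `S_n` with descent set `T`,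
encoded as a single integral over the corresponding points of the cube. -/
noncomputable def descentIntegral (H : ℝ → B) (n : ℕ) (t : ℝ) (T : Finset ℕ) : B :=
  ∫ v in descentRegion n t T, orderedProd H v

lemma descentIntegral_eq_zero (H : ℝ → B) (n : ℕ) (t : ℝ) {T : Finset ℕ} (hT : 0 ∈ T) :
    descentIntegral H n t T = 0 := by
  rw [descentIntegral, descentRegion_eq_empty t hT, setIntegral_empty]

lemma Hperm_eq_integral_chamber (H : ℝ → B) {n : ℕ} (σ : Equiv.Perm (Fin n)) (t : ℝ) :
    Hperm H σ t = ∫ v in chamber t σ, orderedProd H v := by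
  rw [← setIntegral_congr_set (preimage_simplex_ae_eq_chamber t σ), Hperm,
    ← (measurePreserving_comp_perm σ.symm).setIntegral_preimage_emb
      (measurableEmbedding_comp_perm σ.symm)]
  simp [orderedProd]

lemma sum_Hperm_eq_descentIntegral {H : ℝ → B} (hH : Continuous H) (n : ℕ) (t : ℝ)
    (T : Finset ℕ) :
    ∑ σ ∈ Finset.univ.filter (fun σ : Equiv.Perm (Fin n) => descSet σ = T), Hperm H σ t =
      descentIntegral H n t T := by
  rw [descentIntegral, setIntegral_congr_set (descentRegion_ae_eq_biUnion_chamber n t T),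
    integral_biUnion_finset _ (fun σ _ => measurableSet_chamber t σ)
      ((pairwise_disjoint_chamber n t).set_pairwise _)
      fun σ _ => integrableOn_orderedProd hH (chamber_subset_cube t σ)]
  exact Finset.sum_congr rfl fun σ _ => Hperm_eq_integral_chamber H σ t

lemma Hn_eq_descentIntegral [CompleteSpace B] (H : ℝ → B) (n : ℕ) (t : ℝ) :
    Hn H n t = descentIntegral H n t ∅ := by
  rw [descentIntegral, descentRegion_empty]
  rcases n with _ | n
  · have huniv : simplex 0 t = Set.univ := Set.eq_univ_of_forall fun v => by simp [simplex]
    simp [Hn, huniv, orderedProd, Measure.volume_pi_eq_dirac (default : Fin 0 → ℝ)]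
  · simp only [Hn, Hperm, orderedProd, Equiv.Perm.one_apply]

lemma HDyn_eq_sum_descentIntegral {H : ℝ → B} (hH : Continuous H) (n : ℕ) (t : ℝ) :
    HDyn H n t =
      ∑ j ∈ Finset.range n, (-1 : ℝ) ^ j • descentIntegral H n t (Finset.Ico 1 (j + 1)) :=
  Finset.sum_congr rfl fun _ _ => congrArg _ (sum_Hperm_eq_descentIntegral hH n t _)

theorem descentIntegral_mul [CompleteSpace B] {H : ℝ → B} (hH : Continuous H) {m n : ℕ} (t : ℝ)
    {S T : Finset ℕ} (hS : S ⊆ Finset.range m) (hT : 0 ∉ T) :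
    descentIntegral H m t S * descentIntegral H n t T =
      descentIntegral H (m + n) t (joinDescents m S T) +
        descentIntegral H (m + n) t (insert m (joinDescents m S T)) := by
  have hint (k : ℕ) (U : Finset ℕ) : IntegrableOn (orderedProd H) (descentRegion k t U) :=
    integrableOn_orderedProd hH (descentRegion_subset_cube k t U)
  have hne : joinDescents m S T ≠ insert m (joinDescents m S T) := fun h =>
    (add_mem_joinDescents (i := 0) hS).not.2 hT (Finset.insert_eq_self.1 h.symm)
  calc descentIntegral H m t S * descentIntegral H n t T
      = ∫ z in descentRegion m t S ×ˢ descentRegion n t T,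
          orderedProd H z.1 * orderedProd H z.2 := by
        rw [Measure.volume_eq_prod, ← Measure.prod_restrict]
        exact (integral_prod_bilin (ContinuousLinearMap.mul ℝ B) (hint m S) (hint n T)).symm
    _ = ∫ v in descentRegion (m + n) t (joinDescents m S T) ∪
          descentRegion (m + n) t (insert m (joinDescents m S T)), orderedProd H v := by
        simp only [← (measurePreserving_append m n).setIntegral_preimage_emb
          (measurableEmbedding_append m n), preimage_append_descentRegion t hS hT,
          orderedProd_append]
    _ = _ := setIntegral_union (disjoint_descentRegion t hne) (measurableSet_descentRegion _ _ _)
        (hint _ _) (hint _ _)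

/-- The integral over the tuples whose descents are the run `p, …, q - 1`. The sign is chosen so
that the terms of `H_a H_{𝒟_b}` become differences of runs starting at `a + 1` and at `a`. -/
noncomputable def signedRunIntegral (H : ℝ → B) (n : ℕ) (t : ℝ) (p q : ℕ) : B :=
  (-1 : ℝ) ^ (p + q) • descentIntegral H n t (Finset.Ico p q)

lemma Hn_mul_HDyn [CompleteSpace B] {H : ℝ → B} (hH : Continuous H) (a b : ℕ) (t : ℝ) :
    Hn H a t * HDyn H b t = ∑ j ∈ Finset.range b,
      (signedRunIntegral H (a + b) t (a + 1) (a + j + 1) -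
        signedRunIntegral H (a + b) t a (a + j + 1)) := by
  rw [Hn_eq_descentIntegral, HDyn_eq_sum_descentIntegral hH, Finset.mul_sum]
  refine Finset.sum_congr rfl fun j _ => ?_
  have hjoin : joinDescents a ∅ (Finset.Ico 1 (j + 1)) = Finset.Ico (a + 1) (a + j + 1) := by
    simp only [joinDescents, Finset.empty_union, Finset.map_add_left_Ico, add_assoc]
  have hsign : (-1 : ℝ) ^ (a + (a + j + 1)) = -(-1) ^ j := by
    rw [show a + (a + j + 1) = a + a + j + 1 by ring, pow_succ, pow_add,
      Even.neg_one_pow ⟨a, rfl⟩, one_mul, mul_neg_one]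
  rw [mul_smul_comm, descentIntegral_mul hH t (Finset.empty_subset _) (by simp), hjoin,
    Finset.insert_Ico_add_one_left_eq_Ico (by lia), signedRunIntegral, signedRunIntegral,
    add_right_comm a 1, pow_succ, hsign, mul_neg_one, neg_neg, neg_smul, sub_neg_eq_add, smul_add]

lemma signedRunIntegral_self [CompleteSpace B] (H : ℝ → B) (n : ℕ) (t : ℝ) (q : ℕ) :
    signedRunIntegral H n t q q = Hn H n t := by
  rw [signedRunIntegral, Even.neg_one_pow ⟨q, rfl⟩, one_smul, Finset.Ico_self,
    Hn_eq_descentIntegral]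

lemma signedRunIntegral_zero_succ (H : ℝ → B) (n : ℕ) (t : ℝ) (q : ℕ) :
    signedRunIntegral H n t 0 (q + 1) = 0 := by
  rw [signedRunIntegral, descentIntegral_eq_zero H n t (by simp), smul_zero]

theorem sum_antidiagonal_Hn_mul_HDyn [CompleteSpace B] {H : ℝ → B} (hH : Continuous H) (n : ℕ)
    (t : ℝ) :
    ∑ p ∈ Finset.HasAntidiagonal.antidiagonal n, Hn H p.1 t * HDyn H p.2 t =
      (n : ℝ) • Hn H n t := by
  let F := signedRunIntegral H n t
  have hproduct (a : ℕ) (ha : a ∈ Finset.range n.succ) : Hn H a t * HDyn H (n - a) t =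
      ∑ q ∈ Finset.Ico a n, (F (a + 1) (q + 1) - F a (q + 1)) := by
    rw [Hn_mul_HDyn hH, Nat.add_sub_of_le (Finset.mem_range_succ_iff.1 ha),
      Finset.sum_Ico_eq_sum_range]
  calc ∑ p ∈ Finset.HasAntidiagonal.antidiagonal n, Hn H p.1 t * HDyn H p.2 t
      = ∑ a ∈ Finset.range n.succ, ∑ q ∈ Finset.Ico a n, (F (a + 1) (q + 1) - F a (q + 1)) := by
        rw [Finset.Nat.sum_antidiagonal_eq_sum_range_succ fun a b => Hn H a t * HDyn H b t]
        exact Finset.sum_congr rfl hproduct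
    _ = ∑ q ∈ Finset.range n, ∑ a ∈ Finset.range (q + 1), (F (a + 1) (q + 1) - F a (q + 1)) := by
        rw [Finset.sum_range_succ, Finset.Ico_self, Finset.sum_empty, add_zero]
        simp only [Finset.range_eq_Ico]
        exact Finset.sum_Ico_Ico_comm 0 n _
    _ = ∑ _ ∈ Finset.range n, Hn H n t := Finset.sum_congr rfl fun _ _ => by
        rw [Finset.sum_range_sub fun a => F a _]
        simp only [F, signedRunIntegral_self, signedRunIntegral_zero_succ, sub_zero]
    _ = (n : ℝ) • Hn H n t := by
        rw [Finset.sum_const, Finset.card_range, Nat.cast_smul_eq_nsmul]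

section Bounds

variable {H : ℝ → B} {t C : ℝ}

lemma norm_descentIntegral_le (hC : ∀ s ∈ Set.Icc 0 t, ‖H s‖ ≤ C) (n : ℕ) (T : Finset ℕ) :
    ‖descentIntegral H n t T‖ ≤ ‖(1 : B)‖ * C ^ n * volume.real (descentRegion n t T) :=
  norm_setIntegral_le_of_norm_le_const
    (volume_ne_top_of_subset_cube (descentRegion_subset_cube n t T)).lt_top
    fun _ hv => norm_orderedProd_le fun i => hC _ (hv.1 i (Set.mem_univ i))

lemma norm_Hn_le [CompleteSpace B] (ht : 0 ≤ t) (hC : ∀ s ∈ Set.Icc 0 t, ‖H s‖ ≤ C) (n : ℕ) :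
    ‖Hn H n t‖ ≤ ‖(1 : B)‖ * ((C * t) ^ n / n.factorial) := by
  have hC_nonneg : 0 ≤ C := (norm_nonneg _).trans (hC 0 ⟨le_rfl, ht⟩)
  calc ‖Hn H n t‖ ≤ ‖(1 : B)‖ * C ^ n * volume.real (simplex n t) := by
        rw [Hn_eq_descentIntegral, ← descentRegion_empty]
        exact norm_descentIntegral_le hC n ∅
    _ ≤ ‖(1 : B)‖ * C ^ n * (t ^ n / n.factorial) := by
        gcongr
        exact volume_real_simplex_le n ht
    _ = ‖(1 : B)‖ * ((C * t) ^ n / n.factorial) := by ring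

lemma norm_HDyn_le (hH : Continuous H) (ht : 0 ≤ t) (hC : ∀ s ∈ Set.Icc 0 t, ‖H s‖ ≤ C) (n : ℕ) :
    ‖HDyn H n t‖ ≤ ‖(1 : B)‖ * ((2 * C * t) ^ n / n.factorial) := by
  have hC_nonneg : 0 ≤ C := (norm_nonneg _).trans (hC 0 ⟨le_rfl, ht⟩)
  have hchoose : ∑ j ∈ Finset.range n, (n.choose (j + 1) : ℝ) ≤ 2 ^ n := by
    have hsum : ∑ j ∈ Finset.range n, n.choose (j + 1) ≤ 2 ^ n := by
      rw [← Nat.sum_range_choose, Finset.sum_range_succ' _ n]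
      exact Nat.le_add_right _ _
    exact_mod_cast hsum
  calc ‖HDyn H n t‖
      ≤ ∑ j ∈ Finset.range n, ‖descentIntegral H n t (Finset.Ico 1 (j + 1))‖ := by
        rw [HDyn_eq_sum_descentIntegral hH]
        exact (norm_sum_le _ _).trans_eq <| Finset.sum_congr rfl fun j _ => by simp [norm_smul]
    _ ≤ ∑ j ∈ Finset.range n,
          ‖(1 : B)‖ * C ^ n * (n.choose (j + 1) * (t ^ n / n.factorial)) := by
        refine Finset.sum_le_sum fun j hj => (norm_descentIntegral_le hC n _).trans ?_
        gcongr
        exact volume_real_descentRegion_Ico_le ht (Finset.mem_range.1 hj)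
    _ = ‖(1 : B)‖ * ((C * t) ^ n / n.factorial) * ∑ j ∈ Finset.range n, (n.choose (j + 1) : ℝ) := by
        rw [Finset.mul_sum]
        exact Finset.sum_congr rfl fun j _ => by ring
    _ ≤ ‖(1 : B)‖ * ((C * t) ^ n / n.factorial) * 2 ^ n := by gcongr
    _ = ‖(1 : B)‖ * ((2 * C * t) ^ n / n.factorial) := by ring

end Bounds

end IteratedIntegrals

section PowerSeries

variable {E : Type*} [NormedAddCommGroup E] [NormedSpace ℝ E] {a : ℕ → E}

lemma summable_norm_pow_smul_of_norm_le {K M : ℝ} (ha : ∀ n, ‖a n‖ ≤ K * (M ^ n / n.factorial))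
    (l : ℝ) : Summable fun n => ‖l ^ n • a n‖ := by
  refine .of_nonneg_of_le (fun _ => norm_nonneg _) (fun n => ?_)
    ((Real.summable_pow_div_factorial (|l| * M)).mul_left K)
  calc ‖l ^ n • a n‖ = |l| ^ n * ‖a n‖ := by rw [norm_smul, norm_pow, Real.norm_eq_abs]
    _ ≤ |l| ^ n * (K * (M ^ n / n.factorial)) := by gcongr; exact ha n
    _ = K * ((|l| * M) ^ n / n.factorial) := by ring

lemma norm_natCast_mul_pow_pred_smul_le {z R : ℝ} (hz : |z| ≤ R) (hR : 1 ≤ R) (n : ℕ) (x : E) :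
    ‖((n : ℝ) * z ^ (n - 1)) • x‖ ≤ ‖(2 * R) ^ n • x‖ := by
  have hcoeff : (n : ℝ) * |z| ^ (n - 1) ≤ (2 * R) ^ n :=
    calc (n : ℝ) * |z| ^ (n - 1) ≤ 2 ^ n * R ^ (n - 1) := by
          gcongr
          exact_mod_cast n.lt_two_pow_self.le
      _ ≤ 2 ^ n * R ^ n := by gcongr; exact n.sub_le 1
      _ = (2 * R) ^ n := (mul_pow _ _ _).symm
  rw [norm_smul, norm_smul, norm_mul, norm_pow, Real.norm_natCast, Real.norm_eq_abs]
  gcongr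
  exact hcoeff.trans (le_abs_self _)

theorem hasDerivAt_tsum_pow_smul [CompleteSpace E] (ha : ∀ l : ℝ, Summable fun n => ‖l ^ n • a n‖)
    (l : ℝ) :
    HasDerivAt (fun l : ℝ => ∑' n, l ^ n • a n) (∑' n : ℕ, ((n : ℝ) * l ^ (n - 1)) • a n) l := by
  have hl : l ∈ Metric.ball (0 : ℝ) (|l| + 1) := by simp
  have hone : 1 ≤ |l| + 1 := le_add_of_nonneg_left (abs_nonneg l)
  exact hasDerivAt_tsum_of_isPreconnected (g := fun n z => z ^ n • a n)
    (g' := fun n z => ((n : ℝ) * z ^ (n - 1)) • a n) (ha (2 * (|l| + 1))) Metric.isOpen_ball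
    (convex_ball _ _).isPreconnected (fun n z _ => (hasDerivAt_pow n z).smul_const (a n))
    (fun n z hz => norm_natCast_mul_pow_pred_smul_le (mem_ball_zero_iff.1 hz).le hone n (a n))
    hl (ha l).of_norm hl

lemma smul_deriv_tsum_pow_smul [CompleteSpace E] (ha : ∀ l : ℝ, Summable fun n => ‖l ^ n • a n‖)
    (l : ℝ) :
    l • deriv (fun l : ℝ => ∑' n, l ^ n • a n) l = ∑' n : ℕ, l ^ n • ((n : ℝ) • a n) := by
  rw [(hasDerivAt_tsum_pow_smul ha l).deriv, ← tsum_const_smul'']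
  refine tsum_congr fun n => ?_
  rcases n with _ | n
  · simp
  · rw [smul_smul, smul_smul, Nat.add_sub_cancel, mul_left_comm, ← pow_succ', mul_comm]

lemma tsum_pow_smul_mul_tsum_pow_smul {B : Type*} [NormedRing B] [NormedAlgebra ℝ B]
    [CompleteSpace B] {f g : ℕ → B} {l : ℝ} (hf : Summable fun n => ‖l ^ n • f n‖)
    (hg : Summable fun n => ‖l ^ n • g n‖) :
    (∑' n, l ^ n • f n) * (∑' n, l ^ n • g n) =
      ∑' n, l ^ n • ∑ p ∈ Finset.HasAntidiagonal.antidiagonal n, f p.1 * g p.2 := by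
  rw [tsum_mul_tsum_eq_tsum_sum_antidiagonal_of_summable_norm hf hg]
  refine tsum_congr fun n => ?_
  rw [Finset.smul_sum]
  refine Finset.sum_congr rfl fun p hp => ?_
  rw [smul_mul_smul_comm, ← pow_add, Finset.HasAntidiagonal.mem_antidiagonal.1 hp]

end PowerSeries

/-- toy-model RG equation: for every `λ ∈ ℝ`, the series
`A^λ(t) = Σ_{n≥0} λ^n H_n(t)` and `β^λ(t) = Σ_{n≥1} λ^n H_{𝒟_n}(t)` converge
absolutely, `λ ↦ A^λ(t)` is differentiable, and
`λ·(∂/∂λ) A^λ(t) = A^λ(t)·β^λ(t)`. -/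
theorem toy_RG_equation (H : ℝ → A) (hH : Continuous H) (t : ℝ) (ht : 0 ≤ t) (l : ℝ) :
    Summable (fun n : ℕ => ‖l ^ n • Hn H n t‖) ∧
    Summable (fun n : ℕ => ‖l ^ (n + 1) • HDyn H (n + 1) t‖) ∧
    DifferentiableAt ℝ (fun l : ℝ => ∑' n : ℕ, l ^ n • Hn H n t) l ∧
    l • deriv (fun l : ℝ => ∑' n : ℕ, l ^ n • Hn H n t) l =
      (∑' n : ℕ, l ^ n • Hn H n t) * (∑' n : ℕ, l ^ (n + 1) • HDyn H (n + 1) t) := by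
  obtain ⟨C, hC⟩ := isCompact_Icc.exists_bound_of_continuousOn (hH.continuousOn (s := Set.Icc 0 t))
  have hHn := summable_norm_pow_smul_of_norm_le (norm_Hn_le ht hC)
  have hHDyn := summable_norm_pow_smul_of_norm_le (norm_HDyn_le hH ht hC)
  refine ⟨hHn l, (summable_nat_add_iff 1).2 (hHDyn l),
    (hasDerivAt_tsum_pow_smul hHn l).differentiableAt, ?_⟩
  have hshift : ∑' n, l ^ n • HDyn H n t = ∑' n, l ^ (n + 1) • HDyn H (n + 1) t := by
    rw [(hHDyn l).of_norm.tsum_eq_zero_add]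
    simp [HDyn]
  calc l • deriv (fun l : ℝ => ∑' n : ℕ, l ^ n • Hn H n t) l
      = ∑' n : ℕ, l ^ n • ((n : ℝ) • Hn H n t) := smul_deriv_tsum_pow_smul hHn l
    _ = ∑' n, l ^ n • ∑ p ∈ Finset.HasAntidiagonal.antidiagonal n, Hn H p.1 t * HDyn H p.2 t := by
        simp only [sum_antidiagonal_Hn_mul_HDyn hH]
    _ = (∑' n, l ^ n • Hn H n t) * ∑' n, l ^ n • HDyn H n t :=
        (tsum_pow_smul_mul_tsum_pow_smul (hHn l) (hHDyn l)).symm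
    _ = (∑' n, l ^ n • Hn H n t) * ∑' n, l ^ (n + 1) • HDyn H (n + 1) t := by rw [hshift]
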